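/- arXiv:1912.09360 — 3 statements merged into one kernel-verified Lean document; each statement's English description precedes it below -/
import Mathlib

section
/- Let T be a spanning tree of G. If for every tree edge {i,j} of T and every edge {u,v} of G contained in the cut formed by deleting the edge {i,j} from T one has w({i,j}) ≤ w({u,v}), then T is a minimum spanning tree of G. -/
open SimpleGraph

/-- `T` is a spanning tree of `G`: a connected acyclic (spanning) subgraph of `G`. -/
def IsSpanningTree {V : Type*} (G T : SimpleGraph V) : Prop :=
  T ≤ G ∧ T.IsTree

/-- The cost of a graph: the sum of the weights of its edges. -/
noncomputable def cost {V : Type*} (w : Sym2 V → ℝ) (T : SimpleGraph V) : ℝ :=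
  ∑ᶠ e ∈ T.edgeSet, w e

/-- `T` is a minimum spanning tree of `G` with respect to the weights `w`. -/
def IsMST {V : Type*} (G : SimpleGraph V) (w : Sym2 V → ℝ) (T : SimpleGraph V) : Prop :=
  IsSpanningTree G T ∧ ∀ T' : SimpleGraph V, IsSpanningTree G T' → cost w T ≤ cost w T'

/-!
If `T` and `T'` are spanning trees, every edge `f` of `T' \ T` has a partner `e` in `T \ T'` such
that `f` lies in the cut of `T - e` and `e` lies in the cut of `T' - f`. Then `T' - f + e` is a
spanning tree sharing one more edge with `T`, so repeating the exchange pairs `T \ T'` with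
`T' \ T` bijectively, each edge `e` being paired with an edge of the cut of `T - e`. By hypothesis
`e` weighs no more than its partner, and summing over the pairs compares the two costs.
-/

section OrderedFinsum

variable {α β M : Type*} [AddCommMonoid M] [PartialOrder M] [IsOrderedAddMonoid M]

theorem finsum_mem_le_finsum_mem_of_bijOn {s : Set α} {t : Set β} {φ : α → β} {f : α → M}
    {g : β → M} (hs : s.Finite) (hφ : Set.BijOn φ s t) (hfg : ∀ a ∈ s, f a ≤ g (φ a)) :
    ∑ᶠ a ∈ s, f a ≤ ∑ᶠ b ∈ t, g b := by
  rw [← finsum_mem_eq_of_bijOn φ hφ fun _ _ => rfl, finsum_mem_eq_finite_toFinset_sum _ hs,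
    finsum_mem_eq_finite_toFinset_sum _ hs]
  exact Finset.sum_le_sum fun a ha => hfg a (hs.mem_toFinset.mp ha)

theorem finsum_mem_le_finsum_mem_of_sdiff {s t : Set α} {f : α → M} (hs : s.Finite)
    (ht : t.Finite) (hst : ∑ᶠ a ∈ s \ t, f a ≤ ∑ᶠ a ∈ t \ s, f a) :
    ∑ᶠ a ∈ s, f a ≤ ∑ᶠ a ∈ t, f a := by
  rw [← finsum_mem_inter_add_sdiff t hs, ← finsum_mem_inter_add_sdiff s ht, Set.inter_comm t s]
  gcongr

end OrderedFinsum

theorem connected_of_forall_adj_reachable {V : Type*} {G H : SimpleGraph V} (hG : G.Connected)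
    (h : ∀ ⦃u v : V⦄, G.Adj u v → H.Reachable u v) : H.Connected := by
  have := hG.nonempty
  refine ⟨fun u v => ?_⟩
  have huv := hG u v
  rw [reachable_iff_reflTransGen] at huv ⊢
  exact Relation.reflTransGen_closed
    (fun x y hxy => (reachable_iff_reflTransGen x y).mp (h hxy)) _ _ huv

section FundamentalCut

variable {V : Type*} {T T' : SimpleGraph V} {e f : Sym2 V} {u v : V}

/-- The cut formed by deleting `e` from `T`, as the set of all pairs of vertices in different
components of `T - e`; the cut in a host graph `G` is its intersection with `G.edgeSet`. -/
def fundamentalCut (T : SimpleGraph V) (e : Sym2 V) : Set (Sym2 V) :=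
  {f | ¬ (f.map (T.deleteEdges {e}).connectedComponentMk).IsDiag}

theorem mk_mem_fundamentalCut :
    s(u, v) ∈ fundamentalCut T e ↔ ¬ (T.deleteEdges {e}).Reachable u v := by
  simp [fundamentalCut]

theorem mem_fundamentalCut_self (hT : T.IsAcyclic) (he : e ∈ T.edgeSet) :
    e ∈ fundamentalCut T e := by
  induction e with | _ u v
  exact mk_mem_fundamentalCut.mpr (isAcyclic_iff_forall_adj_isBridge.mp hT he)

theorem not_isDiag_of_mem_fundamentalCut (hf : f ∈ fundamentalCut T e) : ¬ f.IsDiag :=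
  fun h => hf h.map

theorem eq_of_mem_edgeSet_of_mem_fundamentalCut (hfT : f ∈ T.edgeSet)
    (hf : f ∈ fundamentalCut T e) : f = e := by
  induction f with | _ u v
  by_contra hne
  exact mk_mem_fundamentalCut.mp hf (deleteEdges_adj.mpr ⟨hfT, hne⟩).reachable

theorem mem_fundamentalCut_of_mem_edges_of_isPath (hT : T.IsAcyclic) {p : T.Walk u v}
    (hp : p.IsPath) (he : e ∈ p.edges) : s(u, v) ∈ fundamentalCut T e := by
  rw [mk_mem_fundamentalCut]
  intro h
  obtain ⟨q, hq⟩ := h.exists_isPath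
  have hpq : p = q.mapLe (deleteEdges_le {e}) :=
    congrArg Subtype.val ((hT.subsingleton_path u v).elim ⟨p, hp⟩ ⟨_, hq.mapLe _⟩)
  rw [hpq, Walk.edges_mapLe_eq_edges] at he
  simpa using q.edges_subset_edgeSet he

theorem exists_mem_edges_mem_fundamentalCut (huv : s(u, v) ∈ fundamentalCut T e)
    (p : T'.Walk u v) : ∃ f ∈ p.edges, f ∈ fundamentalCut T e := by
  obtain ⟨d, hd, hfst, hsnd⟩ := p.exists_boundary_dart
    {x | (T.deleteEdges {e}).Reachable u x} (Reachable.refl u) (mk_mem_fundamentalCut.mp huv)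
  exact ⟨d.edge, List.mem_map_of_mem hd,
    mk_mem_fundamentalCut.mpr fun h => hsnd (hfst.trans h)⟩

theorem exists_mem_fundamentalCut_and_mem_fundamentalCut (hT : T.IsAcyclic) (hT' : T'.IsTree)
    (he : e ∈ T.edgeSet) :
    ∃ f ∈ T'.edgeSet, f ∈ fundamentalCut T e ∧ e ∈ fundamentalCut T' f := by
  induction e with | _ u v
  obtain ⟨p, hp⟩ := hT'.connected.exists_isPath u v
  obtain ⟨f, hfp, hf⟩ := exists_mem_edges_mem_fundamentalCut (mem_fundamentalCut_self hT he) p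
  exact ⟨f, p.edges_subset_edgeSet hfp, hf,
    mem_fundamentalCut_of_mem_edges_of_isPath hT'.isAcyclic hp hfp⟩

theorem isTree_deleteEdges_sup_edge (hT : T.IsTree)
    (huv : ¬ (T.deleteEdges {e}).Reachable u v) : (T.deleteEdges {e} ⊔ edge u v).IsTree := by
  induction e with | _ a b
  set N := T.deleteEdges {s(a, b)} ⊔ edge u v
  have hacyc : N.IsAcyclic := (hT.isAcyclic.anti (deleteEdges_le _)).sup_edge_of_not_reachable huv
  have hne : u ≠ v := fun h => huv (h ▸ .rfl)
  have hNuv : N.Adj u v := Or.inr ((fromEdgeSet_adj _).mpr ⟨rfl, hne⟩)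
  have hN ⦃x y⦄ (hxy : T.Adj x y) : N.Adj x y ∨ s(x, y) = s(a, b) := by
    by_cases hxy' : s(x, y) = s(a, b)
    · exact .inr hxy'
    · exact .inl (Or.inl (deleteEdges_adj.mpr ⟨hxy, hxy'⟩))
  have hab : N.Reachable a b := by
    by_contra h
    have hle : T ≤ N ⊔ edge a b := fun x y hxy => (hN hxy).imp id fun hxy' =>
      (fromEdgeSet_adj _).mpr ⟨hxy', hxy.ne⟩
    have hTuv : T.Adj u v := (isTree_iff_maximal_isAcyclic.mp hT).2.2
      (hacyc.sup_edge_of_not_reachable h) hle (.inl hNuv)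
    have huvab : s(u, v) = s(a, b) :=
      eq_of_mem_edgeSet_of_mem_fundamentalCut hTuv (mk_mem_fundamentalCut.mpr huv)
    exact h (Adj.reachable (by rwa [← mem_edgeSet, ← huvab]))
  refine ⟨connected_of_forall_adj_reachable hT.connected fun x y hxy => ?_, hacyc⟩
  rcases hN hxy with h | h
  · exact h.reachable
  · rcases Sym2.eq_iff.mp h with ⟨rfl, rfl⟩ | ⟨rfl, rfl⟩
    exacts [hab, hab.symm]

theorem exists_isTree_edgeSet_eq_insert_sdiff (hT : T.IsTree) (hf : f ∈ fundamentalCut T e) :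
    ∃ T' : SimpleGraph V, T'.IsTree ∧ T'.edgeSet = insert f (T.edgeSet \ {e}) := by
  induction f with | _ u v
  refine ⟨_, isTree_deleteEdges_sup_edge hT (mk_mem_fundamentalCut.mp hf), ?_⟩
  rw [edgeSet_sup, edgeSet_deleteEdges,
    edgeSet_edge_of_ne (not_isDiag_of_mem_fundamentalCut hf), Set.union_singleton]

theorem exists_bijOn_mem_fundamentalCut (hT : T.IsTree) (hT' : T'.IsTree)
    (hfin : (T'.edgeSet \ T.edgeSet).Finite) :
    ∃ φ : Sym2 V → Sym2 V, Set.BijOn φ (T.edgeSet \ T'.edgeSet) (T'.edgeSet \ T.edgeSet) ∧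
      ∀ e ∈ T.edgeSet \ T'.edgeSet, φ e ∈ fundamentalCut T e := by
  generalize hD : T'.edgeSet \ T.edgeSet = D at hfin ⊢
  induction D, hfin using Set.Finite.induction_on generalizing T' with
  | empty =>
    have hle : T' ≤ T := edgeSet_subset_edgeSet.mp (Set.sdiff_eq_empty.mp hD)
    obtain rfl := hle.antisymm ((isTree_iff_minimal_connected.mp hT).2 hT'.connected hle)
    exact ⟨id, by simp⟩
  | @insert f D hfD _ ih =>
    classical
    obtain ⟨hfT', hfT⟩ : f ∈ T'.edgeSet \ T.edgeSet := hD ▸ Set.mem_insert f D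
    obtain ⟨e, heT, he, hf⟩ :=
      exists_mem_fundamentalCut_and_mem_fundamentalCut hT'.isAcyclic hT hfT'
    have heT' : e ∉ T'.edgeSet := fun h =>
      hfT (eq_of_mem_edgeSet_of_mem_fundamentalCut h he ▸ heT)
    obtain ⟨T'', hT'', hedges⟩ := exists_isTree_edgeSet_eq_insert_sdiff hT' he
    have hD'' : T''.edgeSet \ T.edgeSet = D := by
      rw [hedges, Set.insert_sdiff_of_mem _ heT, sdiff_right_comm, hD,
        Set.insert_sdiff_self_of_notMem hfD]
    have hdiff : T.edgeSet \ T'.edgeSet = insert e (T.edgeSet \ T''.edgeSet) := by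
      ext x; grind
    have heT'' : e ∉ T.edgeSet \ T''.edgeSet := by grind
    obtain ⟨ψ, hψ, hψcut⟩ := ih hT'' hD''
    obtain ⟨φ, hφe, hφψ⟩ : ∃ φ, φ e = f ∧ Set.EqOn ψ φ (T.edgeSet \ T''.edgeSet) :=
      ⟨Function.update ψ e f, Function.update_self e f ψ, fun x hx =>
        (Function.update_of_ne (ne_of_mem_of_not_mem hx heT'') f ψ).symm⟩
    refine ⟨φ, ?_, ?_⟩
    · rw [hdiff, ← hφe]
      exact (hψ.congr hφψ).insert (hφe ▸ hfD)
    · rw [hdiff, Set.forall_mem_insert, hφe]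
      exact ⟨hf, fun x hx => hφψ hx ▸ hψcut x hx⟩

end FundamentalCut

-- Comparing the two differences stays meaningful on infinite graphs, where a `finsum` over a whole
-- edge set may take its junk value `0`.
theorem mst_cut_optimality_sufficient_general {V M : Type*} [AddCommMonoid M] [PartialOrder M]
    [IsOrderedAddMonoid M] {G T T' : SimpleGraph V} (w : Sym2 V → M) (hT : IsSpanningTree G T)
    (hcut : ∀ i j : V, T.Adj i j →
      ∀ u v : V, G.Adj u v → ¬ (T.deleteEdges {s(i, j)}).Reachable u v →
        w s(i, j) ≤ w s(u, v))
    (hT' : IsSpanningTree G T') (hfin : (T'.edgeSet \ T.edgeSet).Finite) :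
    ∑ᶠ e ∈ T.edgeSet \ T'.edgeSet, w e ≤ ∑ᶠ e ∈ T'.edgeSet \ T.edgeSet, w e := by
  obtain ⟨φ, hφ, hφcut⟩ := exists_bijOn_mem_fundamentalCut hT.2 hT'.2 hfin
  refine finsum_mem_le_finsum_mem_of_bijOn (hφ.finite_iff_finite.mpr hfin) hφ fun e he => ?_
  have hφG : φ e ∈ G.edgeSet := edgeSet_mono hT'.1 (hφ.mapsTo he).1
  have hφe := hφcut e he
  generalize φ e = f at hφG hφe
  induction e with | _ i j
  induction f with | _ u v
  exact hcut i j he.1 u v hφG (mk_mem_fundamentalCut.mp hφe)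

/-- Cut Optimality Condition, sufficiency: if `T` is a spanning tree of `G` such that
for every tree edge `{i,j}` and every edge `{u,v}` of `G` in the cut formed by
deleting `{i,j}` from `T` one has `w {i,j} ≤ w {u,v}`, then `T` is a minimum
spanning tree of `G`. -/
theorem mst_cut_optimality_sufficient {V : Type*} [Fintype V]
    (G : SimpleGraph V) (hG : G.Connected) (w : Sym2 V → ℝ)
    (T : SimpleGraph V) (hT : IsSpanningTree G T)
    (hcut : ∀ i j : V, T.Adj i j →
      ∀ u v : V, G.Adj u v → ¬ (T.deleteEdges {s(i, j)}).Reachable u v →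
        w s(i, j) ≤ w s(u, v)) :
    IsMST G w T := by
  refine ⟨hT, fun T' hT' => ?_⟩
  exact finsum_mem_le_finsum_mem_of_sdiff (Set.toFinite _) (Set.toFinite _)
    (mst_cut_optimality_sufficient_general w hT hcut hT' (Set.toFinite _))
end

section
/- Let T be a minimum spanning tree of G and let e = {i,j} be a nontree edge of G. Then the minimum of cost(T') over all spanning trees T' of G containing the edge e equals cost(T) + r-cost(T,e), where r-cost(T,e) = w(e) − max{ w(f) : f an edge on P(T,i,j) }. -/
open SimpleGraph

/-!
Exchanging an edge `f` of a tree for an edge joining the two components of `T - f` gives a tree.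
Exchanging `r` for `e` in `T` attains the claimed value. Conversely, let `T'` be a spanning tree
through `e`. Since `T' - e` separates the ends of `P(T,i,j)`, it separates the ends of some edge `f`
of this path, so `T' - e + f` is a spanning tree and
`cost T ≤ cost T' - w e + w f ≤ cost T' - w e + w r`.
-/

section Reachability

variable {V : Type*} {G H : SimpleGraph V} {u v : V}

lemma exists_mem_edges_not_reachable (p : G.Walk u v) (h : ¬ H.Reachable u v) :
    ∃ x y, s(x, y) ∈ p.edges ∧ ¬ H.Reachable x y := by
  obtain ⟨d, hd, hux, huy⟩ := p.exists_boundary_dart {x | H.Reachable u x} .rfl h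
  exact ⟨d.fst, d.snd, List.mem_map_of_mem hd, fun hxy => huy (hux.trans hxy)⟩

lemma not_reachable_deleteEdges_of_mem_edges (hG : G.IsAcyclic) {p : G.Walk u v}
    (hp : p.IsPath) {f : Sym2 V} (hf : f ∈ p.edges) : ¬ (G.deleteEdges {f}).Reachable u v := by
  classical
  induction f with | h a b
  rw [reachable_deleteEdges_iff_exists_walk]
  rintro ⟨q, hq⟩
  have hpq : p = q.toPath :=
    congrArg Subtype.val ((hG.subsingleton_path u v).elim ⟨p, hp⟩ q.toPath)
  exact hq (q.edges_toPath_subset_edges (hpq ▸ hf))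

lemma reachable_deleteEdges_left_or_right (hG : G.Preconnected) (a b x : V) :
    (G.deleteEdges {s(a, b)}).Reachable x a ∨ (G.deleteEdges {s(a, b)}).Reachable x b := by
  by_contra! ⟨hxa, hxb⟩
  obtain ⟨p⟩ := hG x a
  obtain ⟨d, -, hy, hz⟩ :=
    p.exists_boundary_dart {y | (G.deleteEdges {s(a, b)}).Reachable x y} .rfl hxa
  have hyz : (G.deleteEdges {s(a, b)}).Adj d.fst d.snd := by
    refine deleteEdges_adj.2 ⟨d.adj, fun hd => ?_⟩
    rcases Sym2.eq_iff.1 hd with ⟨hya, -⟩ | ⟨hyb, -⟩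
    · exact hxa (hya ▸ hy)
    · exact hxb (hyb ▸ hy)
  exact hz (hy.trans hyz.reachable)

lemma reachable_deleteEdges_or_of_not_reachable (hG : G.Preconnected) {f : Sym2 V}
    (h : ¬ (G.deleteEdges {f}).Reachable u v) (x : V) :
    (G.deleteEdges {f}).Reachable x u ∨ (G.deleteEdges {f}).Reachable x v := by
  induction f with | h a b
  have hab := reachable_deleteEdges_left_or_right hG a b
  rcases hab u with hu | hu <;> rcases hab v with hv | hv
  · exact (h (hu.trans hv.symm)).elim
  · exact (hab x).imp (·.trans hu.symm) (·.trans hv.symm)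
  · exact (hab x).symm.imp (·.trans hu.symm) (·.trans hv.symm)
  · exact (h (hu.trans hv.symm)).elim

end Reachability

section EdgeExchange

variable {V : Type*} {G T : SimpleGraph V} {u v : V} {f : Sym2 V}

/-- The edge exchange `G - f + uv`, the basic move between spanning trees. The new edge is given by
its endpoints; nothing is added if they coincide. -/
def edgeExchange (G : SimpleGraph V) (f : Sym2 V) (u v : V) : SimpleGraph V :=
  G.deleteEdges {f} ⊔ edge u v

lemma edgeSet_edgeExchange (huv : u ≠ v) :
    (edgeExchange G f u v).edgeSet = insert s(u, v) (G.edgeSet \ {f}) := by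
  rw [edgeExchange, edgeSet_sup, edgeSet_deleteEdges, edgeSet_edge_of_ne huv, Set.union_singleton]

lemma connected_edgeExchange (hG : G.Connected) (h : ¬ (G.deleteEdges {f}).Reachable u v) :
    (edgeExchange G f u v).Connected := by
  have hle : G.deleteEdges {f} ≤ edgeExchange G f u v := le_sup_left
  have hvu : (edgeExchange G f u v).Reachable v u := by
    have huv : u ≠ v := fun huv => h (huv ▸ .rfl)
    have hmem : s(u, v) ∈ (edgeExchange G f u v).edgeSet :=
      edgeSet_edgeExchange huv ▸ Set.mem_insert _ _
    exact (Adj.reachable hmem).symm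
  refine (connected_iff_exists_forall_reachable _).2 ⟨u, fun x => ?_⟩
  rcases reachable_deleteEdges_or_of_not_reachable hG.preconnected h x with hxu | hxv
  · exact (hxu.mono hle).symm
  · exact ((hxv.mono hle).trans hvu).symm

lemma isTree_edgeExchange (hT : T.IsTree) (h : ¬ (T.deleteEdges {f}).Reachable u v) :
    (edgeExchange T f u v).IsTree :=
  ⟨connected_edgeExchange hT.connected h,
    (hT.isAcyclic.anti (deleteEdges_le _)).sup_edge_of_not_reachable h⟩

lemma IsSpanningTree.edgeExchange (hT : IsSpanningTree G T) (huv : G.Adj u v)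
    (h : ¬ (T.deleteEdges {f}).Reachable u v) : IsSpanningTree G (edgeExchange T f u v) :=
  ⟨sup_le ((deleteEdges_le _).trans hT.1) ((edge_le_iff G).2 (.inr huv)),
    isTree_edgeExchange hT.2 h⟩

lemma cost_edgeExchange {w : Sym2 V → ℝ} (hw : (G.edgeSet ∩ Function.support w).Finite)
    (hf : f ∈ G.edgeSet) (h : ¬ (G.deleteEdges {f}).Reachable u v) :
    cost w (edgeExchange G f u v) = cost w G + (w s(u, v) - w f) := by
  have huv : u ≠ v := fun huv => h (huv ▸ .rfl)
  have hnew : s(u, v) ∉ G.edgeSet \ {f} := by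
    rw [← edgeSet_deleteEdges]
    exact fun hadj => h (Adj.reachable hadj)
  have hfin : ((G.edgeSet \ {f}) ∩ Function.support w).Finite :=
    hw.subset (Set.inter_subset_inter_left _ Set.sdiff_subset)
  have hG : cost w G = w f + ∑ᶠ e ∈ G.edgeSet \ {f}, w e := by
    rw [cost, ← finsum_mem_insert' w (Set.notMem_sdiff_of_mem (Set.mem_singleton f)) hfin,
      Set.insert_sdiff_singleton, Set.insert_eq_of_mem hf]
  rw [hG, cost, edgeSet_edgeExchange huv, finsum_mem_insert' w hnew hfin]
  ring

end EdgeExchange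

section MinimumSpanningTree

variable {V : Type*} {G T T' : SimpleGraph V} {w : Sym2 V → ℝ} {i j : V}

lemma IsSpanningTree.finite_edgeSet_inter_support (hT : IsSpanningTree G T)
    (hw : (G.edgeSet ∩ Function.support w).Finite) : (T.edgeSet ∩ Function.support w).Finite :=
  hw.subset (Set.inter_subset_inter_left _ (edgeSet_mono hT.1))

lemma IsMST.exists_mem_edges_cost_add_sub_le (hw : (G.edgeSet ∩ Function.support w).Finite)
    (hT : IsMST G w T) (hT' : IsSpanningTree G T') (hij : s(i, j) ∈ T'.edgeSet)
    (p : T.Walk i j) : ∃ f ∈ p.edges, cost w T + (w s(i, j) - w f) ≤ cost w T' := by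
  have hbridge : ¬ (T'.deleteEdges {s(i, j)}).Reachable i j :=
    isAcyclic_iff_forall_isBridge.1 hT'.2.isAcyclic hij
  obtain ⟨x, y, hxy, hsep⟩ := exists_mem_edges_not_reachable p hbridge
  have hle : cost w T ≤ cost w (edgeExchange T' s(i, j) x y) :=
    hT.2 _ (hT'.edgeExchange (hT.1.1 (p.adj_of_mem_edges hxy)) hsep)
  rw [cost_edgeExchange (hT'.finite_edgeSet_inter_support hw) hij hsep] at hle
  exact ⟨s(x, y), hxy, by linarith⟩

theorem mst_imposed_edge_cost_general (hw : (G.edgeSet ∩ Function.support w).Finite)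
    (hT : IsMST G w T) (hij : G.Adj i j) {p : T.Walk i j} (hp : p.IsPath) {r : Sym2 V}
    (hr : r ∈ p.edges) (hrmax : ∀ f ∈ p.edges, w f ≤ w r) :
    IsLeast {c : ℝ | ∃ T' : SimpleGraph V,
        IsSpanningTree G T' ∧ s(i, j) ∈ T'.edgeSet ∧ c = cost w T'}
      (cost w T + (w s(i, j) - w r)) := by
  constructor
  · have hsep := not_reachable_deleteEdges_of_mem_edges hT.1.2.isAcyclic hp hr
    refine ⟨edgeExchange T r i j, hT.1.edgeExchange hij hsep, ?_, ?_⟩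
    · exact edgeSet_edgeExchange hij.ne ▸ Set.mem_insert _ _
    · exact (cost_edgeExchange (hT.1.finite_edgeSet_inter_support hw)
        (p.edges_subset_edgeSet hr) hsep).symm
  · rintro _ ⟨T', hT', hijT', rfl⟩
    obtain ⟨f, hf, hle⟩ := hT.exists_mem_edges_cost_add_sub_le hw hT' hijT' p
    linarith [hrmax f hf]

end MinimumSpanningTree

/-- Let `T` be an MST of `G` and `e = {i,j}` a nontree edge of `G`. Then the minimum of
`cost T'` over spanning trees `T'` of `G` containing `e` equals
`cost T + (w e - max { w f : f on P(T,i,j) })`; here `r` is a maximum-weight edge of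
the path `P(T,i,j)`, so that this maximum is `w r`. -/
theorem mst_imposed_edge_cost {V : Type*} [Fintype V]
    (G : SimpleGraph V) (hG : G.Connected) (w : Sym2 V → ℝ)
    (T : SimpleGraph V) (hT : IsMST G w T)
    (i j : V) (hij : G.Adj i j) (hnt : s(i, j) ∉ T.edgeSet)
    (p : T.Walk i j) (hp : p.IsPath)
    (r : Sym2 V) (hr : r ∈ p.edges) (hrmax : ∀ f ∈ p.edges, w f ≤ w r) :
    IsLeast {c : ℝ | ∃ T' : SimpleGraph V,
        IsSpanningTree G T' ∧ s(i, j) ∈ T'.edgeSet ∧ c = cost w T'}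
      (cost w T + (w s(i, j) - w r)) := by
  exact mst_imposed_edge_cost_general (Set.toFinite _) hT hij hp hr hrmax
end

section
/- Let T be a minimum spanning tree of G and let e₁, e₂, …, eₙ be distinct nontree edges of G. Define T₀ = T and, for each m from 1 to n, let T_m be obtained from T_{m−1} by removing a maximum-weight edge among the edges of the path in T_{m−1} between the endpoints of e_m that do not belong to {e₁, …, e_{m−1}}, and adding the edge e_m (so T_n = T_{e₁,…,eₙ} contains all of e₁, …, eₙ, which are imposed). Then for every edge {k,l} of G with {k,l} ∉ T_n, r-cost(T_{e₁,…,eₙ},{k,l}) ≥ r-cost(T,{k,l}), where r-cost in T_{e₁,…,eₙ} is computed over non-imposed edges of the path (and is +∞ if the path contains only imposed edges). -/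
open SimpleGraph

/-!
Let `c` be the largest weight on `P(T, k, l)`, and call an edge heavy if it is not imposed and its
weight is not at most `c`, and light otherwise. Throughout the iteration `k` and `l` stay connected
by light edges: an exchange that removes a heavy edge removes no light one, and an exchange that
removes a light edge `r` takes place on a path all of whose edges are light, because `r` is heaviest
among its non-imposed edges; the rest of that path and the new, imposed edge then bypass `r`. As
`Tₙ` is acyclic, its path from `k` to `l` uses only light edges.
-/

section ForestPaths

variable {V : Type*} {G H : SimpleGraph V} {u v x y : V} {p : G.Walk u v}

lemma reachable_of_mem_edges_of_deleteEdges_le (hp : p.IsTrail) (hxy : s(x, y) ∈ p.edges)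
    (hle : G.deleteEdges {s(x, y)} ≤ H) (huv : H.Reachable u v) : H.Reachable x y := by
  have reachable_end {x y : V} (hxy : s(x, y) ∈ p.edges)
      (hle : G.deleteEdges {s(x, y)} ≤ H) : H.Reachable u y := by
    by_contra hy
    exact hp.not_mem_edges_of_not_reachable (fun h ↦ hy (h.mono hle))
      (fun h ↦ hy (huv.trans (h.mono hle))) hxy
  have hux : H.Reachable u x := by
    rw [Sym2.eq_swap] at hxy hle
    exact reachable_end hxy hle
  exact hux.symm.trans (reachable_end hxy hle)

lemma notMem_of_mem_edges_of_reachable_deleteEdges (hG : G.IsAcyclic) (hp : p.IsTrail)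
    {S : Set (Sym2 V)} (huv : (G.deleteEdges S).Reachable u v) {e : Sym2 V} (he : e ∈ p.edges) :
    e ∉ S := by
  intro heS
  induction e with | h x y
  have hbridge : G.IsBridge s(x, y) :=
    isAcyclic_iff_forall_isBridge.1 hG (p.edges_subset_edgeSet he)
  have hle : G.deleteEdges S ≤ G.deleteEdges {s(x, y)} :=
    deleteEdges_anti (Set.singleton_subset_iff.2 heS)
  exact isBridge_iff.1 hbridge
    (reachable_of_mem_edges_of_deleteEdges_le hp he le_rfl (huv.mono hle))

end ForestPaths

section ExchangeEdge

variable {V : Type*} {G : SimpleGraph V} {u v x y : V} {p : G.Walk u v} {r : Sym2 V}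

/-- The graph obtained from `G` by the exchange step of the iteration: removing the edge `r` and
adding the edge `e`. -/
def exchangeEdge (G : SimpleGraph V) (r e : Sym2 V) : SimpleGraph V :=
  fromEdgeSet ((G.edgeSet \ {r}) ∪ {e})

lemma exchangeEdge_eq_deleteEdges_sup_edge (G : SimpleGraph V) (r : Sym2 V) (u v : V) :
    exchangeEdge G r s(u, v) = G.deleteEdges {r} ⊔ edge u v := by
  rw [exchangeEdge, fromEdgeSet_union, fromEdgeSet_sdiff, fromEdgeSet_edgeSet, deleteEdges, edge]

lemma deleteEdges_le_exchangeEdge (G : SimpleGraph V) (r e : Sym2 V) :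
    G.deleteEdges {r} ≤ exchangeEdge G r e := by
  induction e with | h u v
  exact exchangeEdge_eq_deleteEdges_sup_edge G r u v ▸ le_sup_left

lemma deleteEdges_exchangeEdge (G : SimpleGraph V) (r e : Sym2 V) (S : Set (Sym2 V)) :
    (exchangeEdge G r e).deleteEdges (S \ {e}) = exchangeEdge (G.deleteEdges S) r e := by
  rw [exchangeEdge, exchangeEdge, deleteEdges_fromEdgeSet, edgeSet_deleteEdges]
  congr 1
  grind

lemma isAcyclic_exchangeEdge (hG : G.IsAcyclic) (hp : p.IsTrail) (hr : r ∈ p.edges) :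
    (exchangeEdge G r s(u, v)).IsAcyclic := by
  have huv : ¬ (G.deleteEdges {r}).Reachable u v := fun h ↦
    notMem_of_mem_edges_of_reachable_deleteEdges hG hp h hr rfl
  rw [exchangeEdge_eq_deleteEdges_sup_edge]
  exact (hG.anti (deleteEdges_le {r})).sup_edge_of_not_reachable huv

lemma reachable_exchangeEdge (hp : p.IsTrail) (hr : r ∈ p.edges) (h : G.Reachable x y) :
    (exchangeEdge G r s(u, v)).Reachable x y := by
  have hle : G.deleteEdges {r} ≤ exchangeEdge G r s(u, v) := deleteEdges_le_exchangeEdge ..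
  have huv : (exchangeEdge G r s(u, v)).Reachable u v := by
    obtain rfl | hne := eq_or_ne u v
    · rfl
    · exact Adj.reachable ((fromEdgeSet_adj _).2 ⟨Or.inr rfl, hne⟩)
  have reachable_of_adj {x y : V} (hxy : G.Adj x y) :
      (exchangeEdge G r s(u, v)).Reachable x y := by
    obtain rfl | hne := eq_or_ne s(x, y) r
    · exact reachable_of_mem_edges_of_deleteEdges_le hp hr hle huv
    · exact (hle (deleteEdges_adj.2 ⟨hxy, hne⟩)).reachable
  obtain ⟨q⟩ := h
  induction q with
  | nil => rfl
  | cons hxz _ ih => exact (reachable_of_adj hxz).trans ih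

lemma reachable_deleteEdges_exchangeEdge {S : Set (Sym2 V)} (hp : p.IsTrail) (hr : r ∈ p.edges)
    (hS : r ∉ S → ∀ e ∈ p.edges, e ∉ S) (h : (G.deleteEdges S).Reachable x y) :
    ((exchangeEdge G r s(u, v)).deleteEdges (S \ {s(u, v)})).Reachable x y := by
  rw [deleteEdges_exchangeEdge]
  by_cases hrS : r ∈ S
  · have hdel : (G.deleteEdges S).deleteEdges {r} = G.deleteEdges S := by
      rw [deleteEdges_deleteEdges, Set.union_eq_left.2 (Set.singleton_subset_iff.2 hrS)]
    exact h.mono (hdel.ge.trans (deleteEdges_le_exchangeEdge ..))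
  · have hpS : ∀ e ∈ p.edges, e ∈ (G.deleteEdges S).edgeSet := fun e he ↦
      edgeSet_deleteEdges (G := G) S ▸ ⟨p.edges_subset_edgeSet he, hS hrS e he⟩
    have hpS_trail : (p.transfer _ hpS).IsTrail := by
      simpa only [Walk.isTrail_def, Walk.edges_transfer] using hp
    exact reachable_exchangeEdge hpS_trail (by rwa [Walk.edges_transfer]) h

end ExchangeEdge

section ReplacementEdge

variable {V α : Type*} {G : SimpleGraph V} {u v : V} {p : G.Walk u v}

/-- `r` is a replacement edge on the path `p` when the edges in `I` are imposed: an edge of `p`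
outside `I` of maximum weight. -/
structure IsReplacementEdge [LE α] (w : Sym2 V → α) (I : Set (Sym2 V)) (p : G.Walk u v)
    (r : Sym2 V) : Prop where
  mem_edges : r ∈ p.edges
  notMem : r ∉ I
  le : ∀ f ∈ p.edges, f ∉ I → w f ≤ w r

/-- The edges that obstruct the bound `c` on replacement edges when the edges in `I` are imposed:
those outside `I` whose weight is not at most `c`. -/
def heavyEdges [LE α] (w : Sym2 V → α) (I : Set (Sym2 V)) (c : α) : Set (Sym2 V) :=
  {e | e ∉ I ∧ ¬ w e ≤ c}

lemma heavyEdges_insert [LE α] (w : Sym2 V → α) (I : Set (Sym2 V)) (c : α) (e : Sym2 V) :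
    heavyEdges w (insert e I) c = heavyEdges w I c \ {e} := by
  grind [heavyEdges]

lemma IsReplacementEdge.notMem_heavyEdges [Preorder α] {w : Sym2 V → α} {I : Set (Sym2 V)}
    {c : α} {r : Sym2 V} (h : IsReplacementEdge w I p r) (hr : r ∉ heavyEdges w I c) :
    ∀ e ∈ p.edges, e ∉ heavyEdges w I c := by
  have hrc : w r ≤ c := by_contra fun hc ↦ hr ⟨h.notMem, hc⟩
  exact fun e he ⟨heI, hec⟩ ↦ hec ((h.le e he heI).trans hrc)

end ReplacementEdge

section ImposedEdges

variable {V : Type*} {n : ℕ}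

/-- The edges `{a i, b i}` imposed before stage `m` of the iteration, that is those of the steps
`i < m`. Stages are indexed by `Fin (n + 1)` and the step from `i.castSucc` to `i.succ` by
`i : Fin n`. -/
def imposedEdges (a b : Fin n → V) (m : Fin (n + 1)) : Set (Sym2 V) :=
  {e | ∃ i : Fin n, i.castSucc < m ∧ e = s(a i, b i)}

lemma notMem_imposedEdges {a b : Fin n → V} {m : Fin (n + 1)} {e : Sym2 V} :
    e ∉ imposedEdges a b m ↔ ∀ i : Fin n, i.castSucc < m → e ≠ s(a i, b i) := by
  simp [imposedEdges]

lemma imposedEdges_succ (a b : Fin n → V) (m : Fin n) :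
    imposedEdges a b m.succ = insert s(a m, b m) (imposedEdges a b m.castSucc) := by
  ext e
  simp only [imposedEdges, Set.mem_ofPred_eq, Set.mem_insert_iff, Fin.castSucc_lt_succ_iff,
    Fin.castSucc_lt_castSucc_iff, le_iff_eq_or_lt, or_and_right, exists_or, exists_eq_left]

lemma isReplacementEdge_imposedEdges_iff {α : Type*} [LE α] {w : Sym2 V → α} {G : SimpleGraph V}
    {u v : V} {p : G.Walk u v} {r : Sym2 V} {a b : Fin n → V} {m : Fin n} :
    IsReplacementEdge w (imposedEdges a b m.castSucc) p r ↔
      r ∈ p.edges ∧ (∀ i : Fin n, i < m → r ≠ s(a i, b i)) ∧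
        ∀ f ∈ p.edges, (∀ i : Fin n, i < m → f ≠ s(a i, b i)) → w f ≤ w r where
  mp h := ⟨h.mem_edges, notMem_imposedEdges.1 h.notMem,
    fun f hf hfI ↦ h.le f hf (notMem_imposedEdges.2 hfI)⟩
  mpr := fun ⟨hr, hrI, hmax⟩ ↦
    ⟨hr, notMem_imposedEdges.2 hrI, fun f hf hfI ↦ hmax f hf (notMem_imposedEdges.1 hfI)⟩

end ImposedEdges

theorem mst_replacement_cost_monotone_iterated_general {V α : Type*} [Preorder α]
    {w : Sym2 V → α} {T : SimpleGraph V} (hT : T.IsAcyclic) {n : ℕ} {a b : Fin n → V}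
    {Ts : Fin (n + 1) → SimpleGraph V} (h0 : Ts 0 = T)
    (hstep : ∀ m : Fin n, ∃ p : (Ts m.castSucc).Walk (a m) (b m), p.IsPath ∧
      ∃ r, IsReplacementEdge w (imposedEdges a b m.castSucc) p r ∧
        Ts m.succ = exchangeEdge (Ts m.castSucc) r s(a m, b m))
    {k l : V} (q : T.Walk k l) {c : α} (hc : ∀ f ∈ q.edges, w f ≤ c)
    (q' : (Ts (Fin.last n)).Walk k l) (hq' : q'.IsPath) :
    ∀ f ∈ q'.edges, (∀ m : Fin n, f ≠ s(a m, b m)) → w f ≤ c := by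
  have isAcyclic (m : Fin (n + 1)) : (Ts m).IsAcyclic := by
    induction m using Fin.induction with
    | zero => exact h0 ▸ hT
    | succ m ih =>
      obtain ⟨p, hp, r, hr, hTs⟩ := hstep m
      exact hTs ▸ isAcyclic_exchangeEdge ih hp.isTrail hr.mem_edges
  have reachable (m : Fin (n + 1)) :
      ((Ts m).deleteEdges (heavyEdges w (imposedEdges a b m) c)).Reachable k l := by
    induction m using Fin.induction with
    | zero => exact h0 ▸ ⟨q.toDeleteEdges _ fun f hf hheavy ↦ hheavy.2 (hc f hf)⟩
    | succ m ih =>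
      obtain ⟨p, hp, r, hr, hTs⟩ := hstep m
      rw [hTs, imposedEdges_succ, heavyEdges_insert]
      exact reachable_deleteEdges_exchangeEdge hp.isTrail hr.mem_edges hr.notMem_heavyEdges ih
  intro f hf hfI
  have hlight : f ∉ heavyEdges w (imposedEdges a b (Fin.last n)) c :=
    notMem_of_mem_edges_of_reachable_deleteEdges (isAcyclic _) hq'.isTrail (reachable _) hf
  exact by_contra fun hfc ↦ hlight ⟨notMem_imposedEdges.2 fun m _ ↦ hfI m, hfc⟩

/-- Let `T` be an MST of `G` and `e₁,…,eₙ` (with `eₘ = {a m, b m}`) distinct nontree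
edges of `G`. Let `T₀ = T` and let `Tₘ` be obtained from `Tₘ₋₁` by removing a
maximum-weight edge, among the edges of the path in `Tₘ₋₁` between the endpoints of
`eₘ` that are not among `e₁,…,eₘ₋₁`, and adding `eₘ`. Then for every edge `{k,l}` of
`G` not in `Tₙ`, with `rkl` a maximum-weight edge on `P(T,k,l)`, every non-imposed
edge `f` (i.e. `f ∉ {e₁,…,eₙ}`) on the path from `k` to `l` in `Tₙ` satisfies
`w f ≤ w rkl`; that is, `r-cost(T_{e₁,…,eₙ},{k,l}) ≥ r-cost(T,{k,l})` (vacuously when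
the path contains only imposed edges, matching the `+∞` convention). -/
theorem mst_replacement_cost_monotone_iterated {V : Type*} [Fintype V]
    (G : SimpleGraph V) (hG : G.Connected) (w : Sym2 V → ℝ)
    (T : SimpleGraph V) (hT : IsMST G w T)
    (n : ℕ) (a b : Fin n → V)
    (hedge : ∀ m : Fin n, G.Adj (a m) (b m))
    (hnt : ∀ m : Fin n, s(a m, b m) ∉ T.edgeSet)
    (hdist : Function.Injective fun m : Fin n => s(a m, b m))
    (Ts : Fin (n + 1) → SimpleGraph V)
    (h0 : Ts 0 = T)
    (hstep : ∀ m : Fin n, ∃ p : (Ts m.castSucc).Walk (a m) (b m), p.IsPath ∧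
      ∃ r ∈ p.edges,
        (∀ m' : Fin n, m' < m → r ≠ s(a m', b m')) ∧
        (∀ f ∈ p.edges, (∀ m' : Fin n, m' < m → f ≠ s(a m', b m')) → w f ≤ w r) ∧
        Ts m.succ = fromEdgeSet (((Ts m.castSucc).edgeSet \ {r}) ∪ {s(a m, b m)}))
    (k l : V) (hkl : G.Adj k l) (hklnt : s(k, l) ∉ (Ts (Fin.last n)).edgeSet)
    (q : T.Walk k l) (hq : q.IsPath)
    (rkl : Sym2 V) (hrkl : rkl ∈ q.edges) (hrklmax : ∀ f ∈ q.edges, w f ≤ w rkl) :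
    ∀ q' : (Ts (Fin.last n)).Walk k l, q'.IsPath →
      ∀ f ∈ q'.edges, (∀ m : Fin n, f ≠ s(a m, b m)) → w f ≤ w rkl := by
  exact mst_replacement_cost_monotone_iterated_general hT.1.2.isAcyclic h0
    (by simpa only [isReplacementEdge_imposedEdges_iff, exchangeEdge, and_assoc] using hstep)
    q hrklmax
end
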